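/- arXiv:1907.09102 — 2 statements merged into one kernel-verified Lean document; each statement's English description precedes it below -/
import Mathlib

section
/- For any finite strategic game, the collection (R_i^∞)_{i∈I} of Choquet rationalizable action sets satisfies the best-response property, and it contains every collection satisfying the best-response property: if (Q_i)_{i∈I} satisfies the best-response property then Q_i ⊆ R_i^∞ for all i ∈ I. Hence the fixed-point definition of Choquet rationalizability coincides with the inductive one. -/
/-!
The sets `Rk k` decrease in `k` because the sets of admissible capacities do, so by finiteness
they stop changing at some level `K`, where they equal `Rinf`. An action in `Rk (K + 1)` is a best
response to a capacity believing the product of the `Rk K`, i.e. of the `Rinf`; this is the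
best-response property (`exists_Rk_eq_Rinf`).

For maximality, belief passes to larger events (`Believes.mono`). If `Q` has the best-response
property then, by induction on the level, every capacity believing `Q₋ᵢ` survives and hence
`Q i ⊆ Rk k i` (`BRProp.subset_level`).
-/

open Classical

noncomputable section

/-- A capacity on a set of states `σ` (all subsets measurable): normalized and monotone. -/
structure Capacity (σ : Type*) where
  toFun : Set σ → ℝ
  empty' : toFun ∅ = 0
  univ' : toFun Set.univ = 1
  mono' : ∀ ⦃E F : Set σ⦄, E ⊆ F → toFun E ≤ toFun F

/-- A set function `ν` believes an event `E` if `ν(Eᶜ ∪ F) = ν F` for every `F ⊆ E`. -/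
def Believes {σ : Type*} (ν : Set σ → ℝ) (E : Set σ) : Prop :=
  ∀ F : Set σ, F ⊆ E → ν (Eᶜ ∪ F) = ν F

/-- The Choquet integral of a finite-range function `g` with respect to the set
function `ν`:  `∑ x ∈ range g, x * (ν {g ≥ x} - ν {g > x})`, which for the distinct
values `x₁ > x₂ > … > xₙ` of `g` equals `∑ᵢ xᵢ (ν(E₁ ∪ ⋯ ∪ Eᵢ) - ν(E₁ ∪ ⋯ ∪ Eᵢ₋₁))`
where `Eᵢ = {s | g s = xᵢ}`. (Defined as `0` in the degenerate infinite-range case.) -/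
def choquetInt {σ : Type*} (ν : Set σ → ℝ) (g : σ → ℝ) : ℝ :=
  if hf : (Set.range g).Finite then
    ∑ x ∈ hf.toFinset, x * (ν {s | x ≤ g s} - ν {s | x < g s})
  else 0

variable {I : Type} [Fintype I] [DecidableEq I]

/-- Profiles of the opponents of player `i`. -/
abbrev Opp (A : I → Type) (i : I) : Type := ∀ j : {j : I // j ≠ i}, A j.val

variable (A : I → Type) [∀ i, Fintype (A i)] [∀ i, Nonempty (A i)]
  (U : ∀ i, (∀ j, A j) → ℝ)

/-- Combine an action of player `i` with a profile of opponents' actions. -/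
def extendProf (i : I) (a : A i) (b : Opp A i) : ∀ j, A j :=
  fun j => if h : j = i then cast (congrArg A h.symm) a else b ⟨j, h⟩

/-- The payoff to `i` from action `a`, as a function of opponents' profiles. -/
def payoff (i : I) (a : A i) : Opp A i → ℝ :=
  fun b => U i (extendProf A i a b)

/-- `a` is a Choquet best response to the capacity (set function) `ν` on `A₋ᵢ`. -/
def IsCBR (i : I) (ν : Set (Opp A i) → ℝ) (a : A i) : Prop :=
  ∀ a' : A i, choquetInt ν (payoff A U i a') ≤ choquetInt ν (payoff A U i a)

/-- The product `∏_{j ≠ i} Q j` viewed as a set of opponents' profiles. -/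
def prodSet {τ : I → Type} (i : I) (Q : ∀ j, Set (τ j)) :
    Set (∀ j : {j : I // j ≠ i}, τ j.val) :=
  {b | ∀ j, b j ∈ Q j.val}

/-- The inductive definition of Choquet rationalizability: `(CR k).1 i` is the
set `C_i^{k+1}` of capacities and `(CR k).2 i` is the set `R_i^{k+1}` of actions
(indices shifted by one: Lean level `k` is paper level `k+1`). -/
def CR : ℕ → (∀ i, Set (Capacity (Opp A i))) × (∀ i, Set (A i))
  | 0 =>
      ⟨fun _ => Set.univ,
       fun i => {a | ∃ ν ∈ (Set.univ : Set (Capacity (Opp A i))), IsCBR A U i ν.toFun a}⟩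
  | k + 1 =>
      let p := CR k
      let C : ∀ i, Set (Capacity (Opp A i)) :=
        fun i => {ν ∈ p.1 i | Believes ν.toFun (prodSet i p.2)}
      ⟨C, fun i => {a | ∃ ν ∈ C i, IsCBR A U i ν.toFun a}⟩

/-- `Rk k i` is the set `R_i^{k+1}` of level-`(k+1)` Choquet rationalizable actions. -/
def Rk (k : ℕ) (i : I) : Set (A i) := (CR A U k).2 i

/-- `Rinf i = R_i^∞`, the Choquet rationalizable actions of player `i`. -/
def Rinf (i : I) : Set (A i) := ⋂ k, Rk A U k i

/-- A collection `(Q i)_{i ∈ I}` of action sets has the best-response property if every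
`a ∈ Q i` is a Choquet best response to some capacity on `A₋ᵢ` that believes `Q₋ᵢ`. -/
def BRProp (Q : ∀ i, Set (A i)) : Prop :=
  ∀ i, ∀ a ∈ Q i, ∃ ν : Capacity (Opp A i),
    Believes ν.toFun (prodSet i Q) ∧ IsCBR A U i ν.toFun a

/-- Belief is inherited by larger events: for `F ⊆ E'`, one has
`ν (E'ᶜ ∪ F) ≤ ν (Eᶜ ∪ (F ∩ E)) = ν (F ∩ E) ≤ ν F`. -/
theorem Believes.mono {σ : Type*} {ν : Capacity σ} {E E' : Set σ}
    (h : Believes ν.toFun E) (hE : E ⊆ E') : Believes ν.toFun E' := by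
  intro F _
  refine le_antisymm ?_ (ν.mono' Set.subset_union_right)
  calc ν.toFun (E'ᶜ ∪ F) ≤ ν.toFun (Eᶜ ∪ (F ∩ E)) := by
        apply ν.mono'
        rintro s (hs | hs)
        · exact Or.inl fun h' => hs (hE h')
        · by_cases hsE : s ∈ E
          · exact Or.inr ⟨hs, hsE⟩
          · exact Or.inl hsE
    _ = ν.toFun (F ∩ E) := h _ Set.inter_subset_right
    _ ≤ ν.toFun F := ν.mono' Set.inter_subset_left

theorem prodSet_mono {τ : I → Type} (i : I) {Q R : ∀ j, Set (τ j)}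
    (h : ∀ j, Q j ⊆ R j) : prodSet i Q ⊆ prodSet i R :=
  fun _ hb j => h j.val (hb j)

theorem Rk_succ_subset (k : ℕ) (i : I) : Rk A U (k + 1) i ⊆ Rk A U k i := by
  rintro a ⟨ν, hν, ha⟩
  cases k with
  | zero => exact ⟨ν, Set.mem_univ _, ha⟩
  | succ k => exact ⟨ν, hν.1, ha⟩

/-- The decreasing sequence of action sets stabilizes, since there are only finitely many
collections of action sets. -/
theorem exists_Rk_eq_Rinf : ∃ K, Rk A U K = Rinf A U := by
  have hanti : Antitone (Rk A U) := antitone_nat_of_succ_le fun k i => Rk_succ_subset A U k i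
  obtain ⟨K, hK⟩ := WellFoundedGT.monotone_chain_condition
    (⟨fun k => OrderDual.toDual (Rk A U k), hanti⟩ : ℕ →o (∀ i, Set (A i))ᵒᵈ)
  refine ⟨K, funext fun i => Set.Subset.antisymm ?_ (Set.iInter_subset _ K)⟩
  refine Set.subset_iInter fun k => ?_
  rcases le_total K k with h | h
  · have hEq : Rk A U K = Rk A U k := hK k h
    rw [hEq]
  · exact hanti h i

/-- A collection with the best-response property survives every round of elimination, and so do
all the capacities that believe it. -/
theorem BRProp.subset_level {Q : ∀ i, Set (A i)} (hQ : BRProp A U Q) (k : ℕ) :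
    (∀ i (ν : Capacity (Opp A i)), Believes ν.toFun (prodSet i Q) → ν ∈ (CR A U k).1 i) ∧
      ∀ i, Q i ⊆ Rk A U k i := by
  induction k with
  | zero =>
    refine ⟨fun i ν _ => Set.mem_univ _, fun i a ha => ?_⟩
    obtain ⟨ν, _, hbr⟩ := hQ i a ha
    exact ⟨ν, Set.mem_univ _, hbr⟩
  | succ k ih =>
    have hC : ∀ i (ν : Capacity (Opp A i)), Believes ν.toFun (prodSet i Q) →
        ν ∈ (CR A U (k + 1)).1 i :=
      fun i ν hν => ⟨ih.1 i ν hν, hν.mono (prodSet_mono i ih.2)⟩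
    refine ⟨hC, fun i a ha => ?_⟩
    obtain ⟨ν, hν, hbr⟩ := hQ i a ha
    exact ⟨ν, hC i ν hν, hbr⟩

/-- The collection `(R_i^∞)` of Choquet rationalizable action sets has the
best-response property and contains every collection with the best-response property;
hence the fixed-point definition coincides with the inductive one. -/
theorem rationalizable_is_largest_best_response_collection [Nonempty I] :
    BRProp A U (fun i => Rinf A U i) ∧
      ∀ Q : ∀ i, Set (A i), BRProp A U Q → ∀ i, Q i ⊆ Rinf A U i := by
  constructor
  · obtain ⟨K, hK⟩ := exists_Rk_eq_Rinf A U
    intro i a ha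
    obtain ⟨ν, hν, hbr⟩ : a ∈ Rk A U (K + 1) i := Set.mem_iInter.1 ha (K + 1)
    have hb : Believes ν.toFun (prodSet i (Rk A U K)) := hν.2
    rw [hK] at hb
    exact ⟨ν, hb, hbr⟩
  · intro Q hQ i
    exact Set.subset_iInter fun k => (BRProp.subset_level A U hQ k).2 i

end
end

section
/- Fix a finite strategic game, a player i, and a restriction Y = Y_i × Y_{-i} with Y_i ⊆ A_i nonempty and Y_{-i} ⊆ A_{-i} nonempty, and let a_i ∈ Y_i. Then a_i is never a Choquet best response on Y (i.e., there is no capacity ν_i on Y_{-i} such that a_i maximizes the Choquet expected utility ∫ U_i(·, ·) dν_i over Y_i) if and only if there exists a probability distribution α_i on Y_i such that for every nonempty B ⊆ Y_{-i}: Σ_{b_i ∈ Y_i} α_i(b_i) · min_{a_{-i} ∈ B} U_i(b_i, a_{-i}) > min_{a_{-i} ∈ B} U_i(a_i, a_{-i}), i.e., the singleton {a_i} is strictly dominated by a mixed action in the associated restriction of the extended game. -/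
/-!
The argument passes through unanimity games. For nonempty `B`, the unanimity game
`u_B(F) = 1` if `B ⊆ F`, `0` otherwise, satisfies `∫ g du_B = min_B g`, and the Choquet integral
is linear in the set function. Hence a belief function `∑_B w_B u_B` (with `w` a probability
vector on the nonempty events) integrates `g` to `∑_B w_B min_B g`.

If no capacity makes `a` a best response, then no belief function does, so no probability vector
`w` satisfies `∑_B w_B (min_B f_b - min_B f_a) ≤ 0` for all `b`. A theorem of the alternative
(`exists_pos_or_exists_nonpos`, from Hahn-Banach separation of a polytope from the open positive
orthant) then produces the dominating mixed action.

Conversely, belief functions are all that matters: given a capacity `ν` and the action `a`, the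
belief function putting weight `ν{f_a ≥ x} - ν{f_a > x}` on each upper level set `{f_a ≥ x}` lies
below `ν` (`sum_levelWeight_le`) and gives `f_a` the same integral. As the Choquet integral is
monotone in the set function (`choquetInt_le_of_le`), if `a` is a best response to `ν` then it is
one to this belief function, and averaging over its weights contradicts strict dominance.
-/

open Classical

noncomputable section

variable {I : Type} [Fintype I] [DecidableEq I]

variable (A : I → Type) [∀ i, Fintype (A i)] [∀ i, Nonempty (A i)]
  (U : ∀ i, (∀ j, A j) → ℝ)

/-! ### Choquet integrals as functions of the capacity -/

lemma choquetInt_eq_sum {σ : Type*} [Finite σ] (ν : Set σ → ℝ) (g : σ → ℝ) :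
    choquetInt ν g = ∑ x ∈ (Set.finite_range g).toFinset,
      x * (ν {s | x ≤ g s} - ν {s | x < g s}) := by
  unfold choquetInt
  rw [dif_pos (Set.finite_range g)]

/-- The Choquet integral is linear in the set function. -/
lemma choquetInt_sum {σ ι : Type*} [Finite σ] (T : Finset ι) (w : ι → ℝ) (μ : ι → Set σ → ℝ)
    (g : σ → ℝ) :
    choquetInt (fun F => ∑ k ∈ T, w k * μ k F) g = ∑ k ∈ T, w k * choquetInt (μ k) g := by
  simp only [choquetInt_eq_sum, Finset.mul_sum]
  rw [Finset.sum_comm]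
  refine Finset.sum_congr rfl fun x _ => ?_
  rw [← Finset.sum_sub_distrib, Finset.mul_sum]
  exact Finset.sum_congr rfl fun k _ => by ring

/-- The unanimity game of `B`: the set function equal to `1` on supersets of `B` and to `0`
elsewhere. -/
def unanimity {σ : Type*} (B F : Set σ) : ℝ := if B ⊆ F then 1 else 0

/-- Integrating against the unanimity game of `B` returns the minimum over `B`: only the summand
at that minimum survives. -/
lemma choquetInt_unanimity {σ : Type*} [Finite σ] (B : Set σ) (hB : B.Nonempty) (g : σ → ℝ) :
    choquetInt (unanimity B) g = sInf (g '' B) := by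
  have hne : (g '' B).Nonempty := hB.image g
  have hfin : (g '' B).Finite := B.toFinite.image g
  have hmem : sInf (g '' B) ∈ g '' B := hne.csInf_mem hfin
  have hle : ∀ x, B ⊆ {s | x ≤ g s} ↔ x ≤ sInf (g '' B) := by
    intro x
    rw [le_csInf_iff hfin.bddBelow hne]
    simp [Set.subset_def]
  have hlt : ∀ x, B ⊆ {s | x < g s} ↔ x < sInf (g '' B) := by
    intro x
    rw [hfin.lt_csInf_iff hne]
    simp [Set.subset_def]
  rw [choquetInt_eq_sum, Finset.sum_eq_single (sInf (g '' B))]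
  · simp [unanimity, hle, hlt]
  · intro x _ hx
    have : x ≤ sInf (g '' B) ↔ x < sInf (g '' B) :=
      ⟨fun h => lt_of_le_of_ne h hx, le_of_lt⟩
    simp [unanimity, hle, hlt, this]
  · intro h
    exact absurd (by simpa using Set.image_subset_range g B hmem) h

lemma filter_insert_min {y x : ℝ} {S : Finset ℝ} (hy : ∀ z ∈ S, y < z) (hx : x ∈ S) :
    (insert y S).filter (x ≤ ·) = S.filter (x ≤ ·) ∧
      (insert y S).filter (x < ·) = S.filter (x < ·) := by
  have h := hy x hx
  simp [Finset.filter_insert, not_le.mpr h, not_lt.mpr h.le]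

lemma filter_insert_min_self {y : ℝ} {S : Finset ℝ} (hy : ∀ z ∈ S, y < z) :
    (insert y S).filter (y ≤ ·) = insert y S ∧ (insert y S).filter (y < ·) = S := by
  constructor
  · refine Finset.filter_true_of_mem fun z hz => ?_
    rcases Finset.mem_insert.mp hz with rfl | hz
    · exact le_rfl
    · exact (hy z hz).le
  · rw [Finset.filter_insert, if_neg (lt_irrefl y), Finset.filter_true_of_mem hy]

/-- Abel summation estimate, for a nonnegative function `φ` of sets of values. -/
lemma le_sum_mul_levels (φ : Finset ℝ → ℝ) (h0 : φ ∅ = 0) (hφ : ∀ T, 0 ≤ φ T) (S : Finset ℝ) :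
    ∀ y, (∀ x ∈ S, y ≤ x) →
      y * φ S ≤ ∑ x ∈ S, x * (φ (S.filter (x ≤ ·)) - φ (S.filter (x < ·))) := by
  induction S using Finset.induction_on_min with
  | empty => simp [h0]
  | insert z S hz ih =>
    intro y hy
    have hzS : z ∉ S := fun h => lt_irrefl _ (hz z h)
    have hsum : ∑ x ∈ S, x * (φ ((insert z S).filter (x ≤ ·)) - φ ((insert z S).filter (x < ·)))
        = ∑ x ∈ S, x * (φ (S.filter (x ≤ ·)) - φ (S.filter (x < ·))) :=
      Finset.sum_congr rfl fun x hx => by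
        rw [(filter_insert_min hz hx).1, (filter_insert_min hz hx).2]
    rw [Finset.sum_insert hzS, hsum, (filter_insert_min_self hz).1, (filter_insert_min_self hz).2]
    have h1 := ih z fun x hx => (hz x hx).le
    have h2 := mul_le_mul_of_nonneg_right (hy z (Finset.mem_insert_self z S)) (hφ (insert z S))
    linarith

lemma sum_levels (φ : Finset ℝ → ℝ) (h0 : φ ∅ = 0) (S : Finset ℝ) :
    ∑ x ∈ S, (φ (S.filter (x ≤ ·)) - φ (S.filter (x < ·))) = φ S := by
  induction S using Finset.induction_on_min with
  | empty => simp [h0]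
  | insert z S hz ih =>
    have hzS : z ∉ S := fun h => lt_irrefl _ (hz z h)
    have hsum : ∑ x ∈ S, (φ ((insert z S).filter (x ≤ ·)) - φ ((insert z S).filter (x < ·)))
        = ∑ x ∈ S, (φ (S.filter (x ≤ ·)) - φ (S.filter (x < ·))) :=
      Finset.sum_congr rfl fun x hx => by
        rw [(filter_insert_min hz hx).1, (filter_insert_min hz hx).2]
    rw [Finset.sum_insert hzS, hsum, (filter_insert_min_self hz).1, (filter_insert_min_self hz).2,
      ih]
    ring

/-- The Choquet integral is monotone in the set function among set functions that agree on `∅`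
and on the whole space. -/
lemma choquetInt_le_of_le {σ : Type*} [Finite σ] (μ ν : Set σ → ℝ) (h0 : μ ∅ = ν ∅)
    (h1 : μ Set.univ = ν Set.univ) (hle : ∀ F, μ F ≤ ν F) (g : σ → ℝ) :
    choquetInt μ g ≤ choquetInt ν g := by
  set S := (Set.finite_range g).toFinset with hS
  let φ : Finset ℝ → ℝ := fun T => ν (g ⁻¹' T) - μ (g ⁻¹' T)
  have hmem : ∀ s, g s ∈ S := fun s => by simp [hS]
  have hSu : g ⁻¹' (S : Set ℝ) = Set.univ := by ext s; simp [hmem]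
  have hφS : φ S = 0 := by simp [φ, hSu, h1]
  obtain ⟨y, hy⟩ := S.bddBelow
  have key := le_sum_mul_levels φ (by simp [φ, h0]) (fun T => sub_nonneg.mpr (hle _)) S y
    fun x hx => hy hx
  have e1 : ∀ x, g ⁻¹' (S.filter (x ≤ ·) : Finset ℝ) = {s | x ≤ g s} := fun x => by
    ext s; simp [hmem]
  have e2 : ∀ x, g ⁻¹' (S.filter (x < ·) : Finset ℝ) = {s | x < g s} := fun x => by
    ext s; simp [hmem]
  simp only [hφS, mul_zero, φ, e1, e2] at key
  rw [choquetInt_eq_sum, choquetInt_eq_sum, ← sub_nonneg, ← Finset.sum_sub_distrib]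
  refine key.trans_eq (Finset.sum_congr rfl fun x _ => by ring)

/-! ### The belief function below a capacity attached to an act -/

/-- The weight that the set function `ν` attaches to the upper level set `{x ≤ g}`. -/
def levelWeight {σ : Type*} (ν : Set σ → ℝ) (g : σ → ℝ) (x : ℝ) : ℝ :=
  ν {s | x ≤ g s} - ν {s | x < g s}

lemma levelWeight_nonneg {σ : Type*} (ν : Capacity σ) (g : σ → ℝ) (x : ℝ) :
    0 ≤ levelWeight ν.toFun g x :=
  sub_nonneg.mpr (ν.mono' fun s (hs : x < g s) => show x ≤ g s from hs.le)

/-- Level weights telescope over a set of values of `g` that is closed upwards in its range. -/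
lemma sum_levelWeight {σ : Type*} (ν : Capacity σ) (g : σ → ℝ) (S : Finset ℝ)
    (hS : ∀ x ∈ S, ∀ s, x ≤ g s → g s ∈ S) :
    ∑ x ∈ S, levelWeight ν.toFun g x = ν.toFun (g ⁻¹' S) := by
  rw [← sum_levels (fun T => ν.toFun (g ⁻¹' T)) (by simp [ν.empty']) S]
  refine Finset.sum_congr rfl fun x hx => ?_
  have e1 : g ⁻¹' (S.filter (x ≤ ·) : Finset ℝ) = {s | x ≤ g s} := by
    ext s; simpa using fun h => hS x hx s h
  have e2 : g ⁻¹' (S.filter (x < ·) : Finset ℝ) = {s | x < g s} := by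
    ext s; simpa using fun h => hS x hx s (le_of_lt h)
  simp only [e1, e2, levelWeight]

lemma sum_levelWeight_range {σ : Type*} [Finite σ] (ν : Capacity σ) (g : σ → ℝ) :
    ∑ x ∈ (Set.finite_range g).toFinset, levelWeight ν.toFun g x = 1 := by
  rw [sum_levelWeight ν g _ (by simp), ← ν.univ']
  congr 1
  ext s; simp

/-- The belief function built from the level weights of `g` lies below the capacity. -/
lemma sum_levelWeight_le {σ : Type*} [Finite σ] (ν : Capacity σ) (g : σ → ℝ) (F : Set σ) :
    ∑ x ∈ (Set.finite_range g).toFinset,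
      levelWeight ν.toFun g x * unanimity {s | x ≤ g s} F ≤ ν.toFun F := by
  simp only [unanimity, mul_ite, mul_one, mul_zero]
  rw [← Finset.sum_filter, sum_levelWeight]
  · refine ν.mono' fun s hs => ?_
    simp only [Finset.coe_filter, Set.mem_preimage, Set.mem_ofPred_eq] at hs
    exact hs.2 (le_refl (g s))
  · intro x hx s hs
    simp only [Finset.mem_filter] at hx ⊢
    exact ⟨by simp, fun t ht => hx.2 (le_trans hs ht)⟩

/-- The integral of any act `f` against the capacity is at least its integral against the belief
function built from the level weights of `g`; see `choquetInt_eq_sum_levelWeight` for equality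
at `f = g`. -/
lemma sum_levelWeight_mul_sInf_le {σ : Type*} [Finite σ] (ν : Capacity σ)
    (g f : σ → ℝ) :
    ∑ x ∈ (Set.finite_range g).toFinset,
      levelWeight ν.toFun g x * sInf (f '' {s | x ≤ g s}) ≤ choquetInt ν.toFun f := by
  have hne : ∀ x ∈ (Set.finite_range g).toFinset, ({s | x ≤ g s} : Set σ).Nonempty := by
    intro x hx
    obtain ⟨s, rfl⟩ := (Set.finite_range g).mem_toFinset.mp hx
    exact ⟨s, le_refl (g s)⟩
  have hun : ∀ x ∈ (Set.finite_range g).toFinset,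
      levelWeight ν.toFun g x * sInf (f '' {s | x ≤ g s}) =
        levelWeight ν.toFun g x * choquetInt (unanimity {s | x ≤ g s}) f :=
    fun x hx => by rw [choquetInt_unanimity _ (hne x hx) f]
  rw [Finset.sum_congr rfl hun,
    ← choquetInt_sum _ (levelWeight ν.toFun g) fun x => unanimity {s | x ≤ g s}]
  refine choquetInt_le_of_le _ _ ?_ ?_ (sum_levelWeight_le ν g) f
  · rw [ν.empty']
    refine Finset.sum_eq_zero fun x hx => ?_
    simp [unanimity, (hne x hx).ne_empty]
  · simp [unanimity, sum_levelWeight_range, ν.univ']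

lemma choquetInt_eq_sum_levelWeight {σ : Type*} [Finite σ] (ν : Capacity σ) (g : σ → ℝ) :
    choquetInt ν.toFun g = ∑ x ∈ (Set.finite_range g).toFinset,
      levelWeight ν.toFun g x * sInf (g '' {s | x ≤ g s}) := by
  rw [choquetInt_eq_sum]
  refine Finset.sum_congr rfl fun x hx => ?_
  obtain ⟨s, rfl⟩ := (Set.finite_range g).mem_toFinset.mp hx
  have : IsLeast (g '' {t | g s ≤ g t}) (g s) :=
    ⟨⟨s, le_refl (g s), rfl⟩, by rintro _ ⟨t, ht, rfl⟩; exact ht⟩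
  rw [this.csInf_eq, levelWeight, mul_comm]

/-! ### A theorem of the alternative -/

/-- Ville's theorem of the alternative: either some mixture of the rows of `M` is strictly
positive, or some mixture of its columns is nonpositive. -/
lemma exists_pos_or_exists_nonpos {ι κ : Type*} [Fintype ι] [Fintype κ] [Nonempty ι]
    (M : Matrix ι κ ℝ) :
    (∃ α ∈ stdSimplex ℝ ι, ∀ k, 0 < ∑ i, α i * M i k) ∨
      ∃ w ∈ stdSimplex ℝ κ, ∀ i, ∑ k, w k * M i k ≤ 0 := by
  by_cases hd : Disjoint {v : κ → ℝ | ∀ k, 0 < v k} (M.vecMulLinear '' stdSimplex ℝ ι)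
  swap
  · left
    obtain ⟨_, hv, α, hα, rfl⟩ := Set.not_disjoint_iff.mp hd
    exact ⟨α, hα, fun k => by simpa [Matrix.vecMul, dotProduct] using hv k⟩
  right
  have hconv : Convex ℝ {v : κ → ℝ | ∀ k, 0 < v k} := by
    intro v hv u hu p q hp hq hpq k
    have h1 := hv k
    have h2 := hu k
    simp only [Pi.add_apply, Pi.smul_apply, smul_eq_mul]
    rcases hp.eq_or_lt with rfl | hp
    · have : q = 1 := by linarith
      simpa [this] using h2
    · positivity
  have hopen : IsOpen {v : κ → ℝ | ∀ k, 0 < v k} := by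
    simp only [Set.ofPred_forall]
    exact isOpen_iInter_of_finite fun k => isOpen_lt continuous_const (continuous_apply k)
  obtain ⟨f, u, hf, hu⟩ := geometric_hahn_banach_open hconv hopen
    ((convex_stdSimplex ℝ ι).linear_image M.vecMulLinear) hd
  have hrow : ∀ i, u ≤ f (M i) := fun i => by
    have := hu _ ⟨Pi.single i 1, single_mem_stdSimplex ℝ i, rfl⟩
    simpa [Matrix.row] using this
  -- `f` is at most `u` on the closed orthant, which is a cone, so `u` is nonnegative and `f` is
  -- nonpositive there.
  have hcl : ∀ v : κ → ℝ, (∀ k, 0 ≤ v k) → f v ≤ u := by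
    intro v hv
    have hlim : Filter.Tendsto (fun t : ℝ => f (v + t • (1 : κ → ℝ)))
        (nhdsWithin 0 (Set.Ioi 0)) (nhds (f v)) := by
      have hc : Continuous fun t : ℝ => f (v + t • (1 : κ → ℝ)) := by fun_prop
      have := hc.tendsto 0
      simp only [zero_smul, add_zero] at this
      exact this.mono_left nhdsWithin_le_nhds
    refine le_of_tendsto hlim ?_
    filter_upwards [self_mem_nhdsWithin] with t ht
    refine (hf _ fun k => ?_).le
    simpa using add_pos_of_nonneg_of_pos (hv k) ht
  have hu0 : 0 ≤ u := by simpa using hcl 0 (by simp)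
  have hneg : ∀ k, f (Pi.single k 1) ≤ 0 := by
    intro k
    by_contra! hpos
    have h := hcl (((u + 1) / f (Pi.single k 1)) • Pi.single k 1) fun j => by
      have : (0 : ℝ) ≤ (Pi.single k 1 : κ → ℝ) j := by
        by_cases hj : j = k
        · subst hj; simp
        · simp [hj]
      simp only [Pi.smul_apply, smul_eq_mul]
      positivity
    rw [map_smul, smul_eq_mul, div_mul_cancel₀ _ hpos.ne'] at h
    linarith
  have hrep : ∀ v : κ → ℝ, f v = ∑ k, v k * f (Pi.single k 1) := by
    intro v
    conv_lhs => rw [pi_eq_sum_univ' v]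
    simp [map_sum]
  set c : ℝ := ∑ k, -f (Pi.single k 1) with hc
  have hc0 : 0 ≤ c := Finset.sum_nonneg fun k _ => neg_nonneg.mpr (hneg k)
  have hcpos : 0 < c := by
    refine lt_of_le_of_ne hc0 fun h => ?_
    have hz : ∀ k, f (Pi.single k 1) = 0 := fun k => by
      have := (Finset.sum_eq_zero_iff_of_nonneg
        fun k _ => neg_nonneg.mpr (hneg k)).mp h.symm k (Finset.mem_univ k)
      linarith
    have h1 := hf 1 (by simp)
    have h2 := hrow (Classical.arbitrary ι)
    rw [hrep] at h1 h2
    simp only [hz, mul_zero, Finset.sum_const_zero] at h1 h2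
    linarith
  refine ⟨fun k => -f (Pi.single k 1) / c, ⟨fun k => ?_, ?_⟩, fun i => ?_⟩
  · exact div_nonneg (neg_nonneg.mpr (hneg k)) hc0
  · rw [← Finset.sum_div, div_self hcpos.ne']
  · have h : ∑ k, -f (Pi.single k 1) / c * M i k = -f (M i) / c := by
      rw [hrep (M i), ← Finset.sum_neg_distrib, Finset.sum_div]
      exact Finset.sum_congr rfl fun k _ => by ring
    rw [h]
    exact div_nonpos_of_nonpos_of_nonneg (by linarith [hrow i]) hc0

/-! ### Best responses and dominance for a family of acts -/

/-- The capacity (a belief function) whose Möbius weights are the probability vector `w` on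
nonempty events. -/
def beliefCapacity {σ : Type*} [Fintype {B : Set σ // B.Nonempty}]
    (w : {B : Set σ // B.Nonempty} → ℝ) (hw : w ∈ stdSimplex ℝ {B : Set σ // B.Nonempty}) :
    Capacity σ where
  toFun F := ∑ B, w B * unanimity B.1 F
  empty' := Finset.sum_eq_zero fun B _ => by simp [unanimity, B.2.ne_empty]
  univ' := by simpa [unanimity] using hw.2
  mono' E F hEF := by
    refine Finset.sum_le_sum fun B _ => mul_le_mul_of_nonneg_left ?_ (hw.1 B)
    unfold unanimity
    split_ifs with h1 h2
    · exact le_rfl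
    · exact absurd (h1.trans hEF) h2
    · exact zero_le_one
    · exact le_rfl

lemma choquetInt_beliefCapacity {σ : Type*} [Finite σ] [Fintype {B : Set σ // B.Nonempty}]
    (w : {B : Set σ // B.Nonempty} → ℝ) (hw : w ∈ stdSimplex ℝ {B : Set σ // B.Nonempty})
    (g : σ → ℝ) :
    choquetInt (beliefCapacity w hw).toFun g = ∑ B, w B * sInf (g '' B.1) := by
  simp only [beliefCapacity]
  rw [choquetInt_sum]
  exact Finset.sum_congr rfl fun B _ => by rw [choquetInt_unanimity B.1 B.2]

/-- The equivalence for an abstract family of acts `f b` on a finite state space. -/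
lemma never_best_iff_dominated {σ β : Type*} [Finite σ] [Nonempty σ] [Fintype β]
    (f : β → σ → ℝ) (Y : Set β) (a : β) (ha : a ∈ Y) :
    (¬ ∃ ν : Capacity σ, ∀ b ∈ Y, choquetInt ν.toFun (f b) ≤ choquetInt ν.toFun (f a)) ↔
    ∃ α : β → ℝ, (∀ b, 0 ≤ α b) ∧ (∀ b ∉ Y, α b = 0) ∧ (∑ b, α b) = 1 ∧
      ∀ B : Set σ, B.Nonempty → sInf (f a '' B) < ∑ b, α b * sInf (f b '' B) := by
  constructor
  · intro hno
    have : Fintype {B : Set σ // B.Nonempty} := Fintype.ofFinite _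
    have : Nonempty Y := ⟨⟨a, ha⟩⟩
    rcases exists_pos_or_exists_nonpos (fun (b : Y) (B : {B : Set σ // B.Nonempty}) =>
      sInf (f b '' B.1) - sInf (f a '' B.1)) with ⟨α, hα, hpos⟩ | ⟨w, hw, hle⟩
    · have hext : ∀ h : β → ℝ,
          ∑ b, (if hb : b ∈ Y then α ⟨b, hb⟩ else 0) * h b = ∑ b : Y, α b * h b := by
        intro h
        rw [← Finset.sum_subset (Finset.subset_univ (Finset.univ.filter (· ∈ Y)))
            (fun b _ hb => by simp [show b ∉ Y by simpa using hb]),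
          Finset.sum_subtype (p := (· ∈ Y)) _ (by simp)]
        exact Finset.sum_congr rfl fun b _ => by simp
      refine ⟨fun b => if hb : b ∈ Y then α ⟨b, hb⟩ else 0, fun b => ?_, fun b hb => dif_neg hb,
        ?_, fun B hB => ?_⟩
      · dsimp only
        split_ifs with hb
        · exact hα.1 _
        · exact le_rfl
      · have := hext 1
        simpa [hα.2] using this
      · have := hpos ⟨B, hB⟩
        simp only [mul_sub, Finset.sum_sub_distrib, ← Finset.sum_mul, hα.2, one_mul] at this
        rw [hext]
        linarith
    · refine absurd ⟨beliefCapacity w hw, fun b hb => ?_⟩ hno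
      have := hle ⟨b, hb⟩
      simp only [mul_sub, Finset.sum_sub_distrib] at this
      rw [choquetInt_beliefCapacity, choquetInt_beliefCapacity]
      linarith
  · rintro ⟨α, hα0, hαY, hα1, hdom⟩ ⟨ν, hν⟩
    set S := (Set.finite_range (f a)).toFinset with hS
    let w := levelWeight ν.toFun (f a)
    let L : ℝ → Set σ := fun x => {s | x ≤ f a s}
    have hw1 : ∑ x ∈ S, w x = 1 := sum_levelWeight_range ν (f a)
    have hw0 : ∀ x, 0 ≤ w x := levelWeight_nonneg ν (f a)
    have hL : ∀ x ∈ S, (L x).Nonempty := by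
      intro x hx
      obtain ⟨s, rfl⟩ := (Set.finite_range (f a)).mem_toFinset.mp hx
      exact ⟨s, le_refl (f a s)⟩
    have hstrict : ∑ x ∈ S, w x * sInf (f a '' L x) <
        ∑ x ∈ S, w x * ∑ b, α b * sInf (f b '' L x) := by
      refine Finset.sum_lt_sum
        (fun x hx => mul_le_mul_of_nonneg_left (hdom _ (hL x hx)).le (hw0 x)) ?_
      by_contra! hcon
      have hz : ∀ x ∈ S, w x = 0 := by
        intro x hx
        by_contra hne
        have hp : 0 < w x := lt_of_le_of_ne (hw0 x) (Ne.symm hne)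
        exact absurd (hcon x hx) (not_le.mpr (mul_lt_mul_of_pos_left (hdom _ (hL x hx)) hp))
      rw [Finset.sum_eq_zero hz] at hw1
      exact zero_ne_one hw1
    have hswap : ∑ x ∈ S, w x * ∑ b, α b * sInf (f b '' L x) =
        ∑ b, α b * ∑ x ∈ S, w x * sInf (f b '' L x) := by
      simp only [Finset.mul_sum]
      rw [Finset.sum_comm]
      exact Finset.sum_congr rfl fun b _ => Finset.sum_congr rfl fun x _ => by ring
    have hle : ∑ b, α b * ∑ x ∈ S, w x * sInf (f b '' L x) ≤
        ∑ b, α b * choquetInt ν.toFun (f a) := by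
      refine Finset.sum_le_sum fun b _ => ?_
      by_cases hb : b ∈ Y
      · exact mul_le_mul_of_nonneg_left
          ((sum_levelWeight_mul_sInf_le ν (f a) (f b)).trans (hν b hb)) (hα0 b)
      · simp [hαY b hb]
    rw [← Finset.sum_mul, hα1, one_mul, choquetInt_eq_sum_levelWeight] at hle
    rw [hswap] at hstrict
    exact absurd hle (not_le.mpr hstrict)

/-- Pearce-style lemma: Fix a restriction `Y = Yᵢ × Y₋ᵢ` (both nonempty)
and `a ∈ Yᵢ`.  Then `a` is never a Choquet best response on `Y` (no capacity on `Y₋ᵢ`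
makes `a` a maximizer of Choquet expected utility over `Yᵢ`) iff there is a probability
distribution `α` on `Yᵢ` such that for every nonempty `B ⊆ Y₋ᵢ`,
`∑_{b ∈ Yᵢ} α b · min_{c ∈ B} Uᵢ(b, c) > min_{c ∈ B} Uᵢ(a, c)`, i.e. `{a}` is strictly
dominated by a mixed action in the associated restriction of the extended game. -/
theorem never_CBR_iff_strictly_dominated_in_extended_game [Nonempty I]
    (i : I) (Yi : Set (A i)) (Ym : Set (Opp A i))
    (hYi : Yi.Nonempty) (hYm : Ym.Nonempty) (a : A i) (ha : a ∈ Yi) :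
    (¬ ∃ ν : Capacity ↥Ym, ∀ a' ∈ Yi,
        choquetInt ν.toFun (fun c : ↥Ym => payoff A U i a' c.val) ≤
          choquetInt ν.toFun (fun c : ↥Ym => payoff A U i a c.val)) ↔
    (∃ α : A i → ℝ, (∀ b, 0 ≤ α b) ∧ (∀ b ∉ Yi, α b = 0) ∧ (∑ b, α b) = 1 ∧
      ∀ B ⊆ Ym, B.Nonempty →
        (∑ b, α b * sInf (payoff A U i b '' B)) > sInf (payoff A U i a '' B)) := by
  have : Nonempty Ym := hYm.to_subtype
  rw [never_best_iff_dominated (fun (b : A i) (c : Ym) => payoff A U i b c.val) Yi a ha]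
  have himg : ∀ (b : A i) (B : Set Ym), (fun c : Ym => payoff A U i b c.val) '' B =
      payoff A U i b '' (Subtype.val '' B) := fun b B => (Set.image_image _ _ _).symm
  refine exists_congr fun α => and_congr_right fun _ => and_congr_right fun _ =>
    and_congr_right fun _ => ⟨fun h B hB hne => ?_, fun h B hne => ?_⟩
  · have hpre : Subtype.val '' (Subtype.val ⁻¹' B : Set Ym) = B :=
      Subtype.image_preimage_coe Ym B |>.trans (Set.inter_eq_right.mpr hB)
    have := h (Subtype.val ⁻¹' B) (by rw [← Set.image_nonempty, hpre]; exact hne)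
    simpa only [himg, hpre] using this
  · simpa only [himg] using
      h (Subtype.val '' B) (Subtype.coe_image_subset Ym B) (hne.image _)

end
end
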